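/- Let ε > 0. If γ = (γ₁, γ₂) : [0,1] → ℝ² is a geodesic of the Grushin distance d with γ₁(0) ≥ ε and γ₁(1) ≥ ε, then γ₁(t) > 0 for all t ∈ [0,1]; that is, geodesics joining two points of the closed half-plane {x ≥ ε} remain in the open half-plane {x > 0}. -/

import Mathlib

/-! Suppose a geodesic from `a` to `b`, both in `{x ≥ ε}`, passes through a point `m` in `{x ≤ 0}`, so
that `d(a, m) + d(m, b) = d(a, b)`. Almost shortest curves from `a` to `m` and from `m` to `b`
concatenate to a curve from `a` to `b` of length at most `d(a, b)` plus an arbitrarily small error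
(`exists_length_lt`, `exists_concat`). Such a curve can be shortened by a fixed amount, a
contradiction.

The shortening (`grushinDist_le_sub`) replaces `(γ₁, γ₂)` by `(g(γ₁), γ₂)`, where `g = fold ε` is a
`C¹` function with `g(x) = |x|` for `|x| ≥ ε`, `|x| ≤ g(x)` and `|g'| ≤ 1`. If `(u₁, u₂)` controls
`γ`, then `(g'(γ₁) u₁, γ₁ / g(γ₁) u₂)` controls the new curve, which has the same endpoints, and no
component has grown in absolute value. On the strip `|x| ≤ ε / 2` both factors are at most `4 / 5`,
and `γ` has to cross half of this strip, which takes `∫ |u₁| ≥ ε / 2`. The gain is therefore at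
least `1 / 5 * ε / 2 = ε / 10`. -/

open MeasureTheory Set

/-- `u` is a valid (bounded measurable) control for the Lipschitz curve `γ` in the
Grushin plane: `γ'(t) = (u₁(t), γ₁(t)·u₂(t))` for a.e. `t ∈ [0,1]`, expressed in
integral form. -/
def IsAdmissiblePair (γ u : ℝ → ℝ × ℝ) : Prop :=
  (∃ K : NNReal, LipschitzOnWith K γ (Icc 0 1)) ∧
  AEStronglyMeasurable u (volume.restrict (Icc (0 : ℝ) 1)) ∧
  (∃ C : ℝ, ∀ t ∈ Icc (0 : ℝ) 1, ‖u t‖ ≤ C) ∧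
  ∀ t ∈ Icc (0 : ℝ) 1,
    γ t = γ 0 + ∫ s in (0 : ℝ)..t, (((u s).1, (γ s).1 * (u s).2) : ℝ × ℝ)

/-- A curve is admissible if it has a control. -/
def IsAdmissible (γ : ℝ → ℝ × ℝ) : Prop := ∃ u, IsAdmissiblePair γ u

/-- The length of an admissible curve: infimum over controls of the Euclidean
norm of the control. -/
noncomputable def curveLength (γ : ℝ → ℝ × ℝ) : ℝ :=
  sInf {L | ∃ u, IsAdmissiblePair γ u ∧
    L = ∫ t in (0 : ℝ)..1, Real.sqrt ((u t).1 ^ 2 + (u t).2 ^ 2)}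

/-- The Grushin (Carnot–Carathéodory) distance on `ℝ²`. -/
noncomputable def grushinDist (a b : ℝ × ℝ) : ℝ :=
  sInf {L | ∃ γ, IsAdmissible γ ∧ γ 0 = a ∧ γ 1 = b ∧ L = curveLength γ}

/-- A geodesic of the Grushin distance, parametrized on `[0,1]`. -/
def IsGeodesic (γ : ℝ → ℝ × ℝ) : Prop :=
  ∀ s ∈ Icc (0 : ℝ) 1, ∀ t ∈ Icc (0 : ℝ) 1,
    grushinDist (γ s) (γ t) = |s - t| * grushinDist (γ 0) (γ 1)

/-! ### Primitives of bounded functions and admissible pairs -/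

/-- A primitive of a function bounded by `C` is `C`-Lipschitz. -/
lemma lipschitzOnWith_of_eq_integral {E : Type*} [NormedAddCommGroup E] [NormedSpace ℝ E]
    {X f : ℝ → E} {C : NNReal}
    (hf : IntervalIntegrable f volume 0 1) (hC : ∀ t ∈ Icc (0 : ℝ) 1, ‖f t‖ ≤ C)
    (hX : ∀ t ∈ Icc (0 : ℝ) 1, X t = X 0 + ∫ s in (0 : ℝ)..t, f s) :
    LipschitzOnWith C X (Icc 0 1) := by
  have hsub : ∀ t ∈ Icc (0 : ℝ) 1, IntervalIntegrable f volume 0 t := fun t ht =>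
    hf.mono_set (by
      rw [uIcc_of_le ht.1, uIcc_of_le zero_le_one]
      exact Icc_subset_Icc_right ht.2)
  refine LipschitzOnWith.of_dist_le_mul fun s hs t ht => ?_
  rw [dist_eq_norm, hX s hs, hX t ht, add_sub_add_left_eq_sub,
    intervalIntegral.integral_interval_sub_left (hsub s hs) (hsub t ht), Real.dist_eq]
  refine intervalIntegral.norm_integral_le_of_norm_le_const fun r hr => hC r ?_
  exact (uIcc_subset_Icc ht hs) (uIoc_subset_uIcc hr)

lemma intervalIntegrable_of_bdd {E : Type*} [NormedAddCommGroup E] {f : ℝ → E} {C : ℝ}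
    (hm : AEStronglyMeasurable f (volume.restrict (Icc (0 : ℝ) 1)))
    (hC : ∀ t ∈ Icc (0 : ℝ) 1, ‖f t‖ ≤ C) : IntervalIntegrable f volume 0 1 := by
  rw [intervalIntegrable_iff_integrableOn_Icc_of_le zero_le_one]
  refine Integrable.of_bound hm C ?_
  filter_upwards [ae_restrict_mem measurableSet_Icc] with t ht using hC t ht

lemma intervalIntegrable_sub {E : Type*} [NormedAddCommGroup E] {f : ℝ → E}
    (hf : IntervalIntegrable f volume 0 1) {s t : ℝ} (hs : s ∈ Icc (0 : ℝ) 1)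
    (ht : t ∈ Icc (0 : ℝ) 1) : IntervalIntegrable f volume s t :=
  hf.mono_set ((uIcc_subset_Icc hs ht).trans (uIcc_of_le (zero_le_one (α := ℝ))).ge)

/-- Chain rule in integral form, for a Lipschitz primitive `X` of a bounded function `f`. -/
lemma comp_eq_integral {X f g g' : ℝ → ℝ} {C K : NNReal}
    (hf : IntervalIntegrable f volume 0 1) (hC : ∀ t ∈ Icc (0 : ℝ) 1, ‖f t‖ ≤ C)
    (hX : ∀ t ∈ Icc (0 : ℝ) 1, X t = X 0 + ∫ s in (0 : ℝ)..t, f s)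
    (hg : ∀ x, HasDerivAt g (g' x) x) (hgK : LipschitzWith K g) :
    ∀ t ∈ Icc (0 : ℝ) 1, g (X t) = g (X 0) + ∫ s in (0 : ℝ)..t, g' (X s) * f s := by
  intro t ht
  have hlip := hgK.comp_lipschitzOnWith (lipschitzOnWith_of_eq_integral hf hC hX)
  have hIcc : uIcc 0 t ⊆ Icc 0 1 := by
    rw [uIcc_of_le ht.1]; exact Icc_subset_Icc_right ht.2
  have hac : AbsolutelyContinuousOnInterval (g ∘ X) 0 t :=
    (hlip.mono hIcc).absolutelyContinuousOnInterval
  have h1 := hac.integral_deriv_eq_sub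
  have h2 : ∫ s in (0 : ℝ)..t, deriv (g ∘ X) s = ∫ s in (0 : ℝ)..t, g' (X s) * f s := by
    refine intervalIntegral.integral_congr_ae ?_
    have hne : ∀ᵐ s : ℝ, s ≠ 1 := by simp [ae_iff, measure_singleton]
    filter_upwards [hf.ae_hasDerivAt_integral, hne] with s hs hs1 hst
    rw [uIoc_of_le ht.1] at hst
    have hsI : s ∈ Ioo (0 : ℝ) 1 := ⟨hst.1, lt_of_le_of_ne (hst.2.trans ht.2) hs1⟩
    have hd := (hs (by rw [uIcc_of_le zero_le_one]; exact Ioo_subset_Icc_self hsI) 0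
      left_mem_uIcc).const_add (X 0)
    have hdX : HasDerivAt X (f s) s := by
      refine hd.congr_of_eventuallyEq ?_
      filter_upwards [Ioo_mem_nhds hsI.1 hsI.2] with r hr using hX r (Ioo_subset_Icc_self hr)
    exact ((hg (X s)).comp s hdX).deriv
  rw [← h2, h1]
  simp

/-- Everything a pair provides, with the curve equation split into coordinates. -/
lemma IsAdmissiblePair.data {γ u : ℝ → ℝ × ℝ} (h : IsAdmissiblePair γ u) :
    (∃ C : NNReal, (∀ t ∈ Icc (0 : ℝ) 1, ‖u t‖ ≤ C)) ∧
    ContinuousOn γ (Icc 0 1) ∧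
    IntervalIntegrable u volume 0 1 ∧
    IntervalIntegrable (fun s => (γ s).1 * (u s).2) volume 0 1 ∧
    (∀ t ∈ Icc (0 : ℝ) 1, (γ t).1 = (γ 0).1 + ∫ s in (0 : ℝ)..t, (u s).1) ∧
    (∀ t ∈ Icc (0 : ℝ) 1, (γ t).2 = (γ 0).2 + ∫ s in (0 : ℝ)..t, (γ s).1 * (u s).2) := by
  obtain ⟨⟨K, hK⟩, hm, ⟨C, hC⟩, he⟩ := h
  have hu := intervalIntegrable_of_bdd hm hC
  have hu1 : IntervalIntegrable (fun s => (u s).1) volume 0 1 := ⟨hu.1.fst, hu.2.fst⟩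
  have hu2 : IntervalIntegrable (fun s => (u s).2) volume 0 1 := ⟨hu.1.snd, hu.2.snd⟩
  have hxu : IntervalIntegrable (fun s => (γ s).1 * (u s).2) volume 0 1 := by
    refine hu2.continuousOn_mul ?_
    rw [uIcc_of_le zero_le_one]
    exact hK.continuousOn.fst
  have key : ∀ t ∈ Icc (0 : ℝ) 1, (∫ s in (0 : ℝ)..t, (((u s).1, (γ s).1 * (u s).2) : ℝ × ℝ)) =
      (∫ s in (0 : ℝ)..t, (u s).1, ∫ s in (0 : ℝ)..t, (γ s).1 * (u s).2) := by
    intro t ht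
    simp only [intervalIntegral.integral_of_le ht.1]
    have z : (0 : ℝ) ∈ Icc (0 : ℝ) 1 := by simp
    exact integral_pair (intervalIntegrable_sub hu1 z ht).1 (intervalIntegrable_sub hxu z ht).1
  refine ⟨⟨C.toNNReal, fun t ht => (hC t ht).trans (Real.le_coe_toNNReal C)⟩, hK.continuousOn,
    hu, hxu, fun t ht => ?_, fun t ht => ?_⟩
  · rw [he t ht, key t ht]; rfl
  · rw [he t ht, key t ht]; rfl

/-- The Lipschitz condition on the curve follows from the integral equations: the first coordinate
is Lipschitz, hence bounded, hence the second one is Lipschitz as well. -/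
lemma IsAdmissiblePair.mk' {γ u : ℝ → ℝ × ℝ} {C : ℝ}
    (hm : AEStronglyMeasurable u (volume.restrict (Icc (0 : ℝ) 1)))
    (hC : ∀ t ∈ Icc (0 : ℝ) 1, ‖u t‖ ≤ C)
    (hx : ∀ t ∈ Icc (0 : ℝ) 1, (γ t).1 = (γ 0).1 + ∫ s in (0 : ℝ)..t, (u s).1)
    (hy : ∀ t ∈ Icc (0 : ℝ) 1, (γ t).2 = (γ 0).2 + ∫ s in (0 : ℝ)..t, (γ s).1 * (u s).2) :
    IsAdmissiblePair γ u := by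
  have hu := intervalIntegrable_of_bdd hm hC
  have hu1 : IntervalIntegrable (fun s => (u s).1) volume 0 1 := ⟨hu.1.fst, hu.2.fst⟩
  have hu2 : IntervalIntegrable (fun s => (u s).2) volume 0 1 := ⟨hu.1.snd, hu.2.snd⟩
  have hC' : ∀ t ∈ Icc (0 : ℝ) 1, ‖u t‖ ≤ C.toNNReal :=
    fun t ht => (hC t ht).trans (Real.le_coe_toNNReal C)
  have hcont : ContinuousOn (fun t => (γ t).1) (Icc 0 1) :=
    (lipschitzOnWith_of_eq_integral hu1
      (fun t ht => (norm_fst_le (u t)).trans (hC' t ht)) hx).continuousOn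
  have hxu : IntervalIntegrable (fun s => (γ s).1 * (u s).2) volume 0 1 := by
    refine hu2.continuousOn_mul ?_
    rwa [uIcc_of_le zero_le_one]
  obtain ⟨M, hM⟩ := isCompact_Icc.exists_bound_of_continuousOn hcont
  have he : ∀ t ∈ Icc (0 : ℝ) 1,
    γ t = γ 0 + ∫ s in (0 : ℝ)..t, (((u s).1, (γ s).1 * (u s).2) : ℝ × ℝ) := by
    intro t ht
    simp only [intervalIntegral.integral_of_le ht.1]
    have z : (0 : ℝ) ∈ Icc (0 : ℝ) 1 := by simp
    rw [integral_pair (intervalIntegrable_sub hu1 z ht).1 (intervalIntegrable_sub hxu z ht).1]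
    simp only [← intervalIntegral.integral_of_le ht.1]
    exact Prod.ext (hx t ht) (hy t ht)
  refine ⟨⟨(max C (M * C)).toNNReal, lipschitzOnWith_of_eq_integral
    (f := fun s => ((u s).1, (γ s).1 * (u s).2)) ⟨hu1.1.prodMk hxu.1, hu1.2.prodMk hxu.2⟩
    (fun t ht => ?_) he⟩, hm, ⟨C, hC⟩, he⟩
  refine le_trans ?_ (Real.le_coe_toNNReal _)
  have h1 := (norm_fst_le (u t)).trans (hC t ht)
  have h2 := (norm_snd_le (u t)).trans (hC t ht)
  refine max_le_max h1 ?_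
  rw [norm_mul]
  exact mul_le_mul (hM t ht) h2 (norm_nonneg _) ((norm_nonneg _).trans (hM t ht))

lemma concat_intervalIntegrable {E : Type*} [NormedAddCommGroup E] [NormedSpace ℝ E]
    {f k : ℝ → E} (hf : IntervalIntegrable f volume 0 1) (hk : IntervalIntegrable k volume 0 1) :
    IntervalIntegrable (fun s : ℝ => if s ≤ 1 / 2 then (2 : ℝ) • f (2 * s)
      else (2 : ℝ) • k (2 * s - 1)) volume 0 (1 / 2) ∧
    IntervalIntegrable (fun s : ℝ => if s ≤ 1 / 2 then (2 : ℝ) • f (2 * s)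
      else (2 : ℝ) • k (2 * s - 1)) volume (1 / 2) 1 := by
  constructor
  · have := (hf.comp_mul_left (c := 2)).smul (2 : ℝ)
    simp only [zero_div] at this
    refine this.congr (fun s hs => ?_)
    rw [uIoc_of_le (by norm_num)] at hs
    simp only [hs.2, if_true, Pi.smul_apply]
  · have := ((hk.comp_sub_right 1).comp_mul_left (c := 2)).smul (2 : ℝ)
    rw [zero_add, one_add_one_eq_two, div_self two_ne_zero] at this
    refine this.congr (fun s hs => ?_)
    rw [uIoc_of_le (by norm_num)] at hs
    simp only [not_le.2 hs.1, if_false, Pi.smul_apply]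

/-- A primitive of `f` followed by a primitive of `k`, each run at double speed, is a primitive of
the concatenated function. -/
lemma concat_eq_integral {X Y f k : ℝ → ℝ} (hf : IntervalIntegrable f volume 0 1)
    (hk : IntervalIntegrable k volume 0 1)
    (hX : ∀ t ∈ Icc (0 : ℝ) 1, X t = X 0 + ∫ s in (0 : ℝ)..t, f s)
    (hY : ∀ t ∈ Icc (0 : ℝ) 1, Y t = Y 0 + ∫ s in (0 : ℝ)..t, k s) (hXY : X 1 = Y 0) :
    ∀ t ∈ Icc (0 : ℝ) 1, (if t ≤ 1 / 2 then X (2 * t) else Y (2 * t - 1)) =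
      X 0 + ∫ s in (0 : ℝ)..t, if s ≤ 1 / 2 then 2 * f (2 * s) else 2 * k (2 * s - 1) := by
  have e1 : ∀ t, t ≤ 1 / 2 → 0 ≤ t →
      (∫ s in (0 : ℝ)..t, if s ≤ 1 / 2 then 2 * f (2 * s) else 2 * k (2 * s - 1)) =
        ∫ s in (0 : ℝ)..(2 * t), f s := by
    intro t ht ht0
    have : (∫ s in (0 : ℝ)..t, if s ≤ 1 / 2 then 2 * f (2 * s) else 2 * k (2 * s - 1)) =
        ∫ s in (0 : ℝ)..t, 2 * f (2 * s) := by
      refine intervalIntegral.integral_congr_ae (Filter.Eventually.of_forall fun s hs => ?_)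
      rw [uIoc_of_le ht0] at hs
      simp only [hs.2.trans ht, if_true]
    rw [this, intervalIntegral.integral_const_mul,
      intervalIntegral.integral_comp_mul_left _ two_ne_zero]
    simp
  have e2 : ∀ t, 1 / 2 ≤ t → 
      (∫ s in (1 / 2 : ℝ)..t, if s ≤ 1 / 2 then 2 * f (2 * s) else 2 * k (2 * s - 1)) =
        ∫ s in (0 : ℝ)..(2 * t - 1), k s := by
    intro t ht
    have : (∫ s in (1 / 2 : ℝ)..t, if s ≤ 1 / 2 then 2 * f (2 * s) else 2 * k (2 * s - 1)) =
        ∫ s in (1 / 2 : ℝ)..t, 2 * k (2 * s - 1) := by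
      refine intervalIntegral.integral_congr_ae (Filter.Eventually.of_forall fun s hs => ?_)
      rw [uIoc_of_le ht] at hs
      simp only [not_le.2 hs.1, if_false]
    rw [this, intervalIntegral.integral_const_mul,
      intervalIntegral.integral_comp_mul_sub _ two_ne_zero]
    simp
  obtain ⟨i1, i2⟩ := concat_intervalIntegrable hf hk
  simp only [smul_eq_mul] at i1 i2
  intro t ht
  split_ifs with h
  · rw [e1 t h ht.1]
    exact hX _ ⟨by linarith [ht.1], by linarith⟩
  · push Not at h
    have hsub : IntervalIntegrable
      (fun s => if s ≤ 1 / 2 then 2 * f (2 * s) else 2 * k (2 * s - 1)) volume (1 / 2) t :=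
      i2.mono_set (by
        rw [uIcc_of_le h.le, uIcc_of_le (by norm_num)]; exact Icc_subset_Icc_right ht.2)
    rw [← intervalIntegral.integral_add_adjacent_intervals i1 hsub, e1 _ le_rfl (by norm_num),
      e2 t h.le, hY _ ⟨by linarith, by linarith [ht.2]⟩, ← hXY, hX 1 (by simp)]
    norm_num
    ring

/-! ### Lengths, concatenation and the distance -/

lemma IsAdmissiblePair.intervalIntegrable_speed {γ u : ℝ → ℝ × ℝ} (h : IsAdmissiblePair γ u) :
    IntervalIntegrable (fun t => Real.sqrt ((u t).1 ^ 2 + (u t).2 ^ 2)) volume 0 1 := by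
  obtain ⟨⟨C, hC⟩, -, -, -, -, -⟩ := h.data
  refine intervalIntegrable_of_bdd (C := 2 * C) ?_ fun t ht => ?_
  · exact (by fun_prop : Continuous fun p : ℝ × ℝ => Real.sqrt (p.1 ^ 2 + p.2 ^ 2)
      ).comp_aestronglyMeasurable h.2.1
  · have h1 := (norm_fst_le (u t)).trans (hC t ht)
    have h2 := (norm_snd_le (u t)).trans (hC t ht)
    rw [Real.norm_eq_abs] at h1 h2
    rw [Real.norm_of_nonneg (Real.sqrt_nonneg _)]
    refine Real.sqrt_le_iff.2 ⟨by positivity, ?_⟩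
    nlinarith [sq_le_sq' (abs_le.1 h1).1 (abs_le.1 h1).2,
      sq_le_sq' (abs_le.1 h2).1 (abs_le.1 h2).2, sq_nonneg (C : ℝ)]

/-- Admissible curves can be concatenated, and lengths of controls add up. -/
lemma exists_concat {γ u γ' u' : ℝ → ℝ × ℝ} (h : IsAdmissiblePair γ u)
    (h' : IsAdmissiblePair γ' u') (hj : γ 1 = γ' 0) :
    ∃ Γ U, IsAdmissiblePair Γ U ∧ Γ 0 = γ 0 ∧ Γ (1 / 2) = γ 1 ∧ Γ 1 = γ' 1 ∧
      ∫ t in (0 : ℝ)..1, Real.sqrt ((U t).1 ^ 2 + (U t).2 ^ 2) =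
        (∫ t in (0 : ℝ)..1, Real.sqrt ((u t).1 ^ 2 + (u t).2 ^ 2)) +
          ∫ t in (0 : ℝ)..1, Real.sqrt ((u' t).1 ^ 2 + (u' t).2 ^ 2) := by
  obtain ⟨⟨C, hC⟩, -, hu, hxu, hx, hy⟩ := h.data
  obtain ⟨⟨C', hC'⟩, -, hu', hxu', hx', hy'⟩ := h'.data
  have hu1 : IntervalIntegrable (fun s => (u s).1) volume 0 1 := ⟨hu.1.fst, hu.2.fst⟩
  have hu1' : IntervalIntegrable (fun s => (u' s).1) volume 0 1 := ⟨hu'.1.fst, hu'.2.fst⟩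
  obtain ⟨i1, i2⟩ := concat_intervalIntegrable hu hu'
  refine ⟨fun t => if t ≤ 1 / 2 then γ (2 * t) else γ' (2 * t - 1),
    fun s => if s ≤ 1 / 2 then (2 : ℝ) • u (2 * s) else (2 : ℝ) • u' (2 * s - 1),
    IsAdmissiblePair.mk' (C := 2 * max C C') ?_ ?_ ?_ ?_, ?_, ?_, ?_, ?_⟩
  · have := (i1.trans i2).1.aestronglyMeasurable
    rwa [Measure.restrict_congr_set Ioc_ae_eq_Icc] at this
  · intro t ht
    split_ifs with hh
    · rw [norm_smul, Real.norm_two]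
      have := hC (2 * t) ⟨by linarith [ht.1], by linarith⟩
      gcongr
      exact this.trans (le_max_left _ _)
    · rw [norm_smul, Real.norm_two]
      have := hC' (2 * t - 1) ⟨by linarith, by linarith [ht.2]⟩
      gcongr
      exact this.trans (le_max_right _ _)
  · intro t ht
    have := concat_eq_integral hu1 hu1' hx hx' (congrArg Prod.fst hj) t ht
    simpa only [apply_ite Prod.fst, Prod.smul_fst, smul_eq_mul, mul_zero, one_div, inv_nonneg,
      Nat.ofNat_nonneg, if_true] using this
  · intro t ht
    have := concat_eq_integral hxu hxu' hy hy' (congrArg Prod.snd hj) t ht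
    have e : ∀ s : ℝ, (if s ≤ 1 / 2 then γ (2 * s) else γ' (2 * s - 1)).1 *
        (if s ≤ 1 / 2 then (2 : ℝ) • u (2 * s) else (2 : ℝ) • u' (2 * s - 1)).2 =
        if s ≤ 1 / 2 then 2 * ((γ (2 * s)).1 * (u (2 * s)).2)
          else 2 * ((γ' (2 * s - 1)).1 * (u' (2 * s - 1)).2) := by
      intro s
      split_ifs <;> simp <;> ring
    simp only [e]
    simpa only [apply_ite Prod.snd, mul_zero, one_div, inv_nonneg,
      Nat.ofNat_nonneg, if_true] using this
  · simp
  · simp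
  · norm_num
  · have hs := h.intervalIntegrable_speed
    have hs' := h'.intervalIntegrable_speed
    set f := fun t => Real.sqrt ((u t).1 ^ 2 + (u t).2 ^ 2)
    set k := fun t => Real.sqrt ((u' t).1 ^ 2 + (u' t).2 ^ 2)
    have := concat_eq_integral (X := fun t => ∫ s in (0 : ℝ)..t, f s)
      (Y := fun t => (∫ s in (0 : ℝ)..1, f s) + ∫ s in (0 : ℝ)..t, k s) hs hs'
      (by simp) (by simp) (by simp) 1 (by simp)
    norm_num at this
    rw [this]
    refine intervalIntegral.integral_congr fun s _ => ?_
    have e : ∀ v : ℝ × ℝ, Real.sqrt ((2 * v.1) ^ 2 + (2 * v.2) ^ 2) =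
        2 * Real.sqrt (v.1 ^ 2 + v.2 ^ 2) := by
      intro v
      rw [show (2 * v.1) ^ 2 + (2 * v.2) ^ 2 = 2 ^ 2 * (v.1 ^ 2 + v.2 ^ 2) by ring,
        Real.sqrt_mul (by positivity), Real.sqrt_sq (by norm_num)]
    dsimp only
    rw [one_div]
    split_ifs
    · exact e _
    · exact e _

lemma length_nonneg (u : ℝ → ℝ × ℝ) :
    0 ≤ ∫ t in (0 : ℝ)..1, Real.sqrt ((u t).1 ^ 2 + (u t).2 ^ 2) :=
  intervalIntegral.integral_nonneg zero_le_one fun _ _ => Real.sqrt_nonneg _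

lemma curveLength_nonneg (γ : ℝ → ℝ × ℝ) : 0 ≤ curveLength γ :=
  Real.sInf_nonneg (by rintro _ ⟨u, -, rfl⟩; exact length_nonneg u)

lemma grushinDist_le {γ u : ℝ → ℝ × ℝ} (h : IsAdmissiblePair γ u) :
    grushinDist (γ 0) (γ 1) ≤ ∫ t in (0 : ℝ)..1, Real.sqrt ((u t).1 ^ 2 + (u t).2 ^ 2) :=
  calc grushinDist (γ 0) (γ 1) ≤ curveLength γ :=
        csInf_le ⟨0, by rintro _ ⟨γ, -, -, -, rfl⟩; exact curveLength_nonneg γ⟩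
          ⟨γ, ⟨u, h⟩, rfl, rfl, rfl⟩
    _ ≤ _ := csInf_le ⟨0, by rintro _ ⟨u, -, rfl⟩; exact length_nonneg u⟩ ⟨u, h, rfl⟩

/-- The hypothesis is needed because the infimum over an empty set of curves is `0`. -/
lemma exists_length_lt {a b : ℝ × ℝ} (hab : ∃ γ u, IsAdmissiblePair γ u ∧ γ 0 = a ∧ γ 1 = b)
    {η : ℝ} (hη : 0 < η) : ∃ γ u, IsAdmissiblePair γ u ∧ γ 0 = a ∧ γ 1 = b ∧
      ∫ t in (0 : ℝ)..1, Real.sqrt ((u t).1 ^ 2 + (u t).2 ^ 2) < grushinDist a b + η := by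
  obtain ⟨γ₀, u₀, h₀, h₀a, h₀b⟩ := hab
  obtain ⟨_, ⟨γ, ⟨u₁, h₁⟩, ha, hb, rfl⟩, hlt⟩ := Real.lt_sInf_add_pos
    (s := {L | ∃ γ, IsAdmissible γ ∧ γ 0 = a ∧ γ 1 = b ∧ L = curveLength γ})
    ⟨_, γ₀, ⟨u₀, h₀⟩, h₀a, h₀b, rfl⟩ (half_pos hη)
  obtain ⟨_, ⟨u, h, rfl⟩, hlt'⟩ := Real.lt_sInf_add_pos
    (s := {L | ∃ u, IsAdmissiblePair γ u ∧
      L = ∫ t in (0 : ℝ)..1, Real.sqrt ((u t).1 ^ 2 + (u t).2 ^ 2)})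
    ⟨_, u₁, h₁, rfl⟩ (half_pos hη)
  refine ⟨γ, u, h, ha, hb, ?_⟩
  change _ < curveLength γ + _ at hlt'
  change _ < grushinDist a b + _ at hlt
  linarith

/-- Horizontal segments are admissible. -/
lemma horizontal_pair (x x' y : ℝ) :
    IsAdmissiblePair (fun t => (x + t * (x' - x), y)) (fun _ => (x' - x, 0)) :=
  IsAdmissiblePair.mk' (C := ‖((x' - x, 0) : ℝ × ℝ)‖) (by fun_prop) (fun _ _ => le_rfl)
    (by intro t ht; simp; ring) (by intro t ht; simp)

/-- Vertical segments off the singular line are admissible. -/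
lemma vertical_pair {x : ℝ} (hx : x ≠ 0) (y y' : ℝ) :
    IsAdmissiblePair (fun t => (x, y + t * (y' - y))) (fun _ => (0, (y' - y) / x)) :=
  IsAdmissiblePair.mk' (C := ‖((0, (y' - y) / x) : ℝ × ℝ)‖) (by fun_prop) (fun _ _ => le_rfl)
    (by intro t ht; simp) (by intro t ht; simp [mul_div_cancel₀ _ hx]; ring)

lemma exists_pair_from {a : ℝ × ℝ} (ha : a.1 ≠ 0) (m : ℝ × ℝ) :
    ∃ γ u, IsAdmissiblePair γ u ∧ γ 0 = a ∧ γ 1 = m := by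
  obtain ⟨Γ, U, h, h0, -, h1, -⟩ := exists_concat (vertical_pair ha a.2 m.2)
    (horizontal_pair a.1 m.1 m.2) (by simp)
  exact ⟨Γ, U, h, by simp [h0], by simp [h1]⟩

lemma exists_pair_to {b : ℝ × ℝ} (hb : b.1 ≠ 0) (m : ℝ × ℝ) :
    ∃ γ u, IsAdmissiblePair γ u ∧ γ 0 = m ∧ γ 1 = b := by
  obtain ⟨Γ, U, h, h0, -, h1, -⟩ := exists_concat (horizontal_pair m.1 b.1 m.2)
    (vertical_pair hb m.2 b.2) (by simp)
  exact ⟨Γ, U, h, by simp [h0], by simp [h1]⟩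

/-! ### Folding the plane away from the singular line -/

/-- A `C¹` convex replacement for `|x|`: it equals `|x|` for `δ ≤ |x|` and `(x² + δ²) / (2δ)` for
`|x| ≤ δ`. The formula by positive parts makes its derivative immediate. -/
noncomputable def fold (δ x : ℝ) : ℝ :=
  (max (x + δ) 0 ^ 2 - max (x - δ) 0 ^ 2) / (2 * δ) - x

/-- The derivative of `fold δ`, namely `x / δ` clamped to `[-1, 1]`. -/
noncomputable def foldDeriv (δ x : ℝ) : ℝ :=
  (max (x + δ) 0 - max (x - δ) 0) / δ - 1

lemma hasDerivAt_max_sq (x : ℝ) : HasDerivAt (fun x : ℝ => max x 0 ^ 2) (2 * max x 0) x := by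
  rcases lt_trichotomy x 0 with h | rfl | h
  · rw [max_eq_right h.le, mul_zero]
    refine (hasDerivAt_const x (0 : ℝ)).congr_of_eventuallyEq ?_
    filter_upwards [Iio_mem_nhds h] with y hy
    simp [max_eq_right (mem_Iio.1 hy).le]
  · rw [max_self, mul_zero, hasDerivAt_iff_isLittleO]
    have : (fun y : ℝ => y ^ 2) =o[nhds 0] fun y => y := by
      simpa using Asymptotics.isLittleO_pow_pow (𝕜 := ℝ) (m := 1) (n := 2) (by norm_num)
    refine Asymptotics.IsBigO.trans_isLittleO (Asymptotics.IsBigO.of_bound 1 ?_)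
      (by simpa using this)
    refine Filter.Eventually.of_forall fun y => ?_
    rcases le_total y 0 with hy | hy <;> simp [hy]
    positivity
  · rw [max_eq_left h.le]
    have := hasDerivAt_pow 2 x
    refine (HasDerivAt.congr_of_eventuallyEq (f := fun y : ℝ => y ^ 2) (by simpa using this) ?_)
    filter_upwards [Ioi_mem_nhds h] with y hy
    simp [max_eq_left (mem_Ioi.1 hy).le]

lemma hasDerivAt_fold {δ : ℝ} (hδ : 0 < δ) (x : ℝ) : HasDerivAt (fold δ) (foldDeriv δ x) x := by
  have h1 := (hasDerivAt_max_sq (x + δ)).comp_add_const x δ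
  have h2 := (hasDerivAt_max_sq (x - δ)).comp_sub_const x δ
  refine (((h1.sub h2).div_const (2 * δ)).sub (hasDerivAt_id x)).congr_deriv ?_
  rw [foldDeriv]
  field_simp

lemma abs_foldDeriv_le {δ : ℝ} (hδ : 0 < δ) (x : ℝ) : |foldDeriv δ x| ≤ 1 := by
  rw [foldDeriv, abs_le]
  have h : 0 ≤ max (x + δ) 0 - max (x - δ) 0 := by
    rw [sub_nonneg]; exact max_le_max_right _ (by linarith)
  have h' : max (x + δ) 0 - max (x - δ) 0 ≤ 2 * δ := by
    rcases max_cases (x + δ) 0 with ⟨h1, h2⟩ | ⟨h1, h2⟩ <;>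
    rcases max_cases (x - δ) 0 with ⟨h3, h4⟩ | ⟨h3, h4⟩ <;> linarith
  have h1 := div_nonneg h hδ.le
  have h2 := (div_le_iff₀ hδ).2 h'
  constructor <;> linarith

lemma continuous_foldDeriv (δ : ℝ) : Continuous (foldDeriv δ) := by
  unfold foldDeriv; fun_prop

lemma fold_of_le {δ : ℝ} (hδ : 0 < δ) {x : ℝ} (hx : δ ≤ x) : fold δ x = x := by
  rw [fold, max_eq_left (by linarith), max_eq_left (by linarith)]
  field_simp
  ring

lemma fold_of_le_neg {δ : ℝ} (hδ : 0 < δ) {x : ℝ} (hx : x ≤ -δ) : fold δ x = -x := by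
  rw [fold, max_eq_right (by linarith), max_eq_right (by linarith)]
  simp

lemma fold_of_abs_le {δ : ℝ} (hδ : 0 < δ) {x : ℝ} (hx : |x| ≤ δ) : fold δ x = (x ^ 2 + δ ^ 2) / (2 * δ) := by
  rw [abs_le] at hx
  rw [fold, max_eq_left (by linarith), max_eq_right (by linarith)]
  field_simp
  ring

lemma abs_le_fold {δ : ℝ} (hδ : 0 < δ) (x : ℝ) : |x| ≤ fold δ x := by
  rcases le_total |x| δ with h | h
  · rw [fold_of_abs_le hδ h, le_div_iff₀ (by positivity)]
    nlinarith [sq_nonneg (|x| - δ), sq_abs x]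
  · rcases le_abs'.1 h with h | h
    · rw [fold_of_le_neg hδ h, abs_of_nonpos (by linarith)]
    · rw [fold_of_le hδ h, abs_of_nonneg (by linarith)]

lemma fold_pos {δ : ℝ} (hδ : 0 < δ) (x : ℝ) : 0 < fold δ x := by
  rcases le_total |x| δ with h | h
  · rw [fold_of_abs_le hδ h]; positivity
  · exact hδ.trans_le (h.trans (abs_le_fold hδ x))

lemma abs_foldDeriv_le_of_abs_le {δ : ℝ} (hδ : 0 < δ) {x : ℝ} (hx : |x| ≤ δ / 2) : |foldDeriv δ x| ≤ 4 / 5 := by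
  have hx' := abs_le.1 hx
  have : foldDeriv δ x = x / δ := by
    rw [foldDeriv, max_eq_left (by linarith), max_eq_right (by linarith)]
    field_simp
    ring
  rw [this, abs_div, abs_of_pos hδ, div_le_iff₀ hδ]
  linarith

lemma abs_le_fold_of_abs_le {δ : ℝ} (hδ : 0 < δ) {x : ℝ} (hx : |x| ≤ δ / 2) : |x| ≤ 4 / 5 * fold δ x := by
  rw [fold_of_abs_le hδ (by linarith), ← mul_div_assoc, le_div_iff₀ (by positivity)]
  nlinarith [mul_nonneg (sub_nonneg.2 hx) (by linarith [abs_nonneg x] : (0:ℝ) ≤ 2 * δ - |x|),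
    sq_abs x]

lemma lipschitzWith_fold {δ : ℝ} (hδ : 0 < δ) : LipschitzWith 1 (fold δ) :=
  lipschitzWith_of_nnnorm_deriv_le (fun x => (hasDerivAt_fold hδ x).differentiableAt) fun x => by
    rw [(hasDerivAt_fold hδ x).deriv, ← NNReal.coe_le_coe]
    simpa using abs_foldDeriv_le hδ x

lemma sqrt_scale_le {a b p q c : ℝ} (hc : 0 ≤ c) (hp : |p| ≤ c) (hq : |q| ≤ c) :
    Real.sqrt ((p * a) ^ 2 + (q * b) ^ 2) ≤ c * Real.sqrt (a ^ 2 + b ^ 2) := by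
  rw [show c * Real.sqrt (a ^ 2 + b ^ 2) = Real.sqrt (c ^ 2 * (a ^ 2 + b ^ 2)) by
    rw [Real.sqrt_mul (sq_nonneg c), Real.sqrt_sq hc]]
  refine Real.sqrt_le_sqrt ?_
  have h1 : p ^ 2 ≤ c ^ 2 := sq_le_sq' (abs_le.1 hp).1 (abs_le.1 hp).2
  have h2 : q ^ 2 ≤ c ^ 2 := sq_le_sq' (abs_le.1 hq).1 (abs_le.1 hq).2
  nlinarith [mul_le_mul_of_nonneg_right h1 (sq_nonneg a),
    mul_le_mul_of_nonneg_right h2 (sq_nonneg b)]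

/-- A curve going from height `δ` to height `0` crosses the strip `|X| ≤ δ / 2` during some
time interval over which it changes by at least `δ / 2`. -/
lemma exists_descent {X : ℝ → ℝ} {δ T : ℝ} (hδ : 0 < δ) (hX : ContinuousOn X (Icc 0 1))
    (hT : T ∈ Icc (0 : ℝ) 1) (h0 : δ ≤ X 0) (hXT : X T ≤ 0) :
    ∃ t₁ t₂, 0 ≤ t₁ ∧ t₁ ≤ t₂ ∧ t₂ ≤ 1 ∧ δ / 2 ≤ |X t₂ - X t₁| ∧
      ∀ s ∈ Ioo t₁ t₂, |X s| ≤ δ / 2 := by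
  have cA : IsCompact (Icc 0 1 ∩ X ⁻¹' Iic 0) :=
    isCompact_Icc.of_isClosed_subset (hX.preimage_isClosed_of_isClosed isClosed_Icc isClosed_Iic)
      inter_subset_left
  obtain ⟨t₂, ⟨ht₂, h2⟩, hleast⟩ := cA.exists_isLeast ⟨T, hT, hXT⟩
  have hX' : ContinuousOn X (Icc 0 t₂) := hX.mono (Icc_subset_Icc_right ht₂.2)
  have cB : IsCompact (Icc 0 t₂ ∩ X ⁻¹' Ici (δ / 2)) :=
    isCompact_Icc.of_isClosed_subset (hX'.preimage_isClosed_of_isClosed isClosed_Icc isClosed_Ici)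
      inter_subset_left
  obtain ⟨t₁, ⟨ht₁, h1⟩, hgreatest⟩ :=
    cB.exists_isGreatest ⟨0, ⟨le_rfl, ht₂.1⟩, by simp only [mem_preimage, mem_Ici]; linarith⟩
  simp only [mem_preimage, mem_Ici, mem_Iic] at h1 h2
  refine ⟨t₁, t₂, ht₁.1, ht₁.2, ht₂.2, ?_, fun s hs => ?_⟩
  · rw [abs_sub_comm]
    exact le_trans (by linarith) (le_abs_self _)
  · have hs0 : 0 ≤ s := ht₁.1.trans hs.1.le
    have hpos : 0 < X s := by
      by_contra! hn
      exact hs.2.not_ge (hleast ⟨⟨hs0, hs.2.le.trans ht₂.2⟩, hn⟩)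
    have hlt : X s < δ / 2 := by
      by_contra! hn
      exact hs.1.not_ge (hgreatest ⟨⟨hs0, hs.2.le⟩, hn⟩)
    rw [abs_of_pos hpos]
    exact hlt.le

/-- Replacing the first coordinate of a curve by its image under `fold δ` shortens every curve
which starts and ends in `{x ≥ δ}` and meets `{x ≤ 0}`, by at least `δ / 10`, an amount independent
of the curve. -/
lemma grushinDist_le_sub {γ u : ℝ → ℝ × ℝ} (h : IsAdmissiblePair γ u) {δ T : ℝ} (hδ : 0 < δ)
    (h0 : δ ≤ (γ 0).1) (h1 : δ ≤ (γ 1).1) (hT : T ∈ Icc (0 : ℝ) 1) (hγT : (γ T).1 ≤ 0) :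
    grushinDist (γ 0) (γ 1) ≤
      (∫ t in (0 : ℝ)..1, Real.sqrt ((u t).1 ^ 2 + (u t).2 ^ 2)) - δ / 10 := by
  obtain ⟨⟨C, hC⟩, hc, hu, hxu, hx, hy⟩ := h.data
  have hu1 : IntervalIntegrable (fun s => (u s).1) volume 0 1 := ⟨hu.1.fst, hu.2.fst⟩
  have hcx : ContinuousOn (fun t => (γ t).1) (Icc 0 1) := hc.fst
  have hfold : Continuous (fold δ) := (lipschitzWith_fold hδ).continuous
  have hq : ∀ x, |x / fold δ x| ≤ 1 := fun x => by
    rw [abs_div, abs_of_pos (fold_pos hδ x), div_le_one (fold_pos hδ x)]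
    exact abs_le_fold hδ x
  -- The second component keeps `γ₂` unchanged: `fold δ γ₁ * (γ₁ / fold δ γ₁ * u₂) = γ₁ * u₂`.
  set v : ℝ → ℝ × ℝ := fun t => (foldDeriv δ (γ t).1 * (u t).1,
    (γ t).1 / fold δ (γ t).1 * (u t).2) with hv
  have hpair : IsAdmissiblePair (fun t => (fold δ (γ t).1, (γ t).2)) v := by
    refine IsAdmissiblePair.mk' (C := C) ?_ ?_ ?_ ?_
    · have m1 : AEStronglyMeasurable (fun t => foldDeriv δ (γ t).1)
          (volume.restrict (Icc (0 : ℝ) 1)) :=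
        ((continuous_foldDeriv δ).comp_continuousOn hcx).aestronglyMeasurable measurableSet_Icc
      have m2 : AEStronglyMeasurable (fun t => (γ t).1 / fold δ (γ t).1)
          (volume.restrict (Icc (0 : ℝ) 1)) :=
        (hcx.div (hfold.comp_continuousOn hcx)
          (fun t _ => (fold_pos hδ _).ne')).aestronglyMeasurable measurableSet_Icc
      exact (m1.mul h.2.1.fst).prodMk (m2.mul h.2.1.snd)
    · intro t ht
      refine max_le (le_trans ?_ ((norm_fst_le _).trans (hC t ht)))
        (le_trans ?_ ((norm_snd_le _).trans (hC t ht)))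
      · rw [norm_mul]
        exact mul_le_of_le_one_left (norm_nonneg _) (abs_foldDeriv_le hδ _)
      · rw [norm_mul]
        exact mul_le_of_le_one_left (norm_nonneg _) (hq _)
    · exact comp_eq_integral hu1 (fun t ht => (norm_fst_le _).trans (hC t ht)) hx
        (hasDerivAt_fold hδ) (lipschitzWith_fold hδ)
    · intro t ht
      rw [hy t ht]
      congr 1
      refine intervalIntegral.integral_congr fun s _ => ?_
      have := (fold_pos hδ (γ s).1).ne'
      simp only [hv]
      field_simp
  have hle := grushinDist_le hpair
  simp only [fold_of_le hδ h0, fold_of_le hδ h1, Prod.mk.eta] at hle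
  have hsu := h.intervalIntegrable_speed
  have hsv := hpair.intervalIntegrable_speed
  obtain ⟨t₁, t₂, ht₁, h12, ht₂, hdrop, hsmall⟩ := exists_descent hδ hcx hT h0 hγT
  have ht₁' : t₁ ∈ Icc (0 : ℝ) 1 := ⟨ht₁, h12.trans ht₂⟩
  have ht₂' : t₂ ∈ Icc (0 : ℝ) 1 := ⟨ht₁.trans h12, ht₂⟩
  have hD := hsu.sub hsv
  have hgain : δ / 10 ≤ ∫ t in (0 : ℝ)..1, (Real.sqrt ((u t).1 ^ 2 + (u t).2 ^ 2) -
      Real.sqrt ((v t).1 ^ 2 + (v t).2 ^ 2)) := by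
    have z : (0 : ℝ) ∈ Icc (0 : ℝ) 1 := by simp
    have e : (γ t₂).1 - (γ t₁).1 = ∫ s in t₁..t₂, (u s).1 := by
      rw [hx t₂ ht₂', hx t₁ ht₁', add_sub_add_left_eq_sub,
        intervalIntegral.integral_interval_sub_left (intervalIntegrable_sub hu1 z ht₂')
          (intervalIntegrable_sub hu1 z ht₁')]
    calc δ / 10 ≤ 1 / 5 * |(γ t₂).1 - (γ t₁).1| := by linarith
      _ ≤ 1 / 5 * ∫ s in t₁..t₂, |(u s).1| := by
        rw [e]
        gcongr
        exact intervalIntegral.abs_integral_le_integral_abs h12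
      _ = ∫ s in t₁..t₂, 1 / 5 * |(u s).1| := by rw [intervalIntegral.integral_const_mul]
      _ ≤ ∫ t in t₁..t₂, (Real.sqrt ((u t).1 ^ 2 + (u t).2 ^ 2) -
            Real.sqrt ((v t).1 ^ 2 + (v t).2 ^ 2)) := by
        refine intervalIntegral.integral_mono_on_of_le_Ioo h12
          ((intervalIntegrable_sub hu1 ht₁' ht₂').abs.const_mul _)
          (intervalIntegrable_sub hD ht₁' ht₂') fun s hs => ?_
        have h3 := hsmall s hs
        have h4 : |(γ s).1 / fold δ (γ s).1| ≤ 4 / 5 := by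
          rw [abs_div, abs_of_pos (fold_pos hδ _), div_le_iff₀ (fold_pos hδ _)]
          exact abs_le_fold_of_abs_le hδ h3
        have h5 := sqrt_scale_le (a := (u s).1) (b := (u s).2) (by norm_num)
          (abs_foldDeriv_le_of_abs_le hδ h3) h4
        have h6 : |(u s).1| ≤ Real.sqrt ((u s).1 ^ 2 + (u s).2 ^ 2) :=
          Real.abs_le_sqrt (by nlinarith [sq_nonneg (u s).2])
        simp only [hv]
        linarith
      _ ≤ _ := by
        refine intervalIntegral.integral_mono_interval ht₁ h12 ht₂ ?_ hD
        refine Filter.Eventually.of_forall fun s => ?_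
        have := sqrt_scale_le (a := (u s).1) (b := (u s).2) zero_le_one
          (abs_foldDeriv_le hδ (γ s).1) (hq (γ s).1)
        simp only [hv, Pi.zero_apply, sub_nonneg]
        linarith
  rw [intervalIntegral.integral_sub hsu hsv] at hgain
  linarith

/-! ### Geodesics -/

theorem stmt_16 (ε : ℝ) (hε : 0 < ε) (γ : ℝ → ℝ × ℝ) (hγ : IsGeodesic γ)
    (h0 : ε ≤ (γ 0).1) (h1 : ε ≤ (γ 1).1) :
    ∀ t ∈ Icc (0 : ℝ) 1, 0 < (γ t).1 := by
  intro t ht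
  by_contra! hneg
  -- Two errors `ε / 40` add up to less than the gain `ε / 10`.
  obtain ⟨c, u, hc, hc0, hc1, hcl⟩ := exists_length_lt
    (exists_pair_from (hε.trans_le h0).ne' (γ t)) (η := ε / 40) (by positivity)
  obtain ⟨c', u', hc', hc0', hc1', hcl'⟩ := exists_length_lt
    (exists_pair_to (hε.trans_le h1).ne' (γ t)) (η := ε / 40) (by positivity)
  obtain ⟨Γ, U, hΓ, hΓ0, hΓm, hΓ1, hL⟩ := exists_concat hc hc' (hc1.trans hc0'.symm)
  rw [hc0] at hΓ0
  rw [hc1] at hΓm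
  rw [hc1'] at hΓ1
  have hshort := grushinDist_le_sub hΓ (T := 1 / 2) hε (by rwa [hΓ0]) (by rwa [hΓ1])
    (by norm_num) (by rwa [hΓm])
  rw [hΓ0, hΓ1, hL] at hshort
  have g1 := hγ 0 (by simp) t ht
  have g2 := hγ t ht 1 (by simp)
  rw [zero_sub, abs_neg, abs_of_nonneg ht.1] at g1
  rw [abs_sub_comm, abs_of_nonneg (sub_nonneg.2 ht.2)] at g2
  linarith
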